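/- Let 0 < p* < p ≤ 0.5, let h > 0, and let p′ ∈ [p*, 0.5] satisfy |p − p′| ≤ h/2 (p′ is the node of a grid with step h on [p*, 0.5] closest to p). Then for all integers n ≥ 1 and 0 ≤ k ≤ n, |Δ_{n,k}(p)/ρ(p) − Δ_{n,k}(p′)/ρ(p′)| ≤ (h/2) · L(p*), where L(p) = (1/((1 − 2pq)√(pq))) · (c₁/p + c₂ + c₃ · (1 − 2p)(1 + 2pq)/(1 − 2pq)) with c₁ = 0.516, c₂ = 0.121, c₃ = 0.271. -/

import Mathlib

/-- The standard normal distribution function Φ. -/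
noncomputable def Phi (x : ℝ) : ℝ :=
  (Real.sqrt (2 * Real.pi))⁻¹ * ∫ t in Set.Iio x, Real.exp (-t ^ 2 / 2)

/-- The left-continuous binomial distribution function
`F_{n,p}(x) = Σ_{0 ≤ i < x} C(n,i) p^i q^{n−i}`. -/
noncomputable def binomCDF (n : ℕ) (p x : ℝ) : ℝ :=
  ∑ i ∈ Finset.range (n + 1),
    if (i : ℝ) < x then (n.choose i : ℝ) * p ^ i * (1 - p) ^ (n - i) else 0

/-- `G_{n,p}(x) = Φ((x − np)/√(npq))`. -/
noncomputable def Gnp (n : ℕ) (p x : ℝ) : ℝ :=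
  Phi ((x - n * p) / Real.sqrt (n * p * (1 - p)))

/-- `Δ_{n,k}(p) = max{ |F_{n,p}(k) − G_{n,p}(k)|, |F_{n,p}(k+1) − G_{n,p}(k)| }`. -/
noncomputable def Deltank (n k : ℕ) (p : ℝ) : ℝ :=
  max |binomCDF n p k - Gnp n p k| |binomCDF n p (k + 1) - Gnp n p k|

/-- `ρ(p) = (p² + q²)/√(pq)`. -/
noncomputable def rho (p : ℝ) : ℝ :=
  (p ^ 2 + (1 - p) ^ 2) / Real.sqrt (p * (1 - p))

/-- `L(p) = (1/((1−2pq)√(pq))) (c₁/p + c₂ + c₃ (1−2p)(1+2pq)/(1−2pq))` with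
`c₁ = 0.516`, `c₂ = 0.121`, `c₃ = 0.271`. -/
noncomputable def L (p : ℝ) : ℝ :=
  (1 / ((1 - 2 * p * (1 - p)) * Real.sqrt (p * (1 - p)))) *
    (0.516 / p + 0.121 +
      0.271 * ((1 - 2 * p) * (1 + 2 * p * (1 - p)) / (1 - 2 * p * (1 - p))))

lemma cos_le_one_sub_sq_add_pow_four (y : ℝ) :
    Real.cos y ≤ 1 - y ^ 2 / 2 + y ^ 4 / 24 := by
  have key : ∀ z : ℝ, 0 ≤ z → Real.cos z ≤ 1 - z ^ 2 / 2 + z ^ 4 / 24 := by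
    intro z hz
    have hd : ∀ t : ℝ, HasDerivAt (fun t : ℝ => 1 - t ^ 2 / 2 + t ^ 4 / 24 - Real.cos t)
        (-t + t ^ 3 / 6 + Real.sin t) t := by
      intro t
      have h := ((((hasDerivAt_pow 2 t).div_const 2).const_sub 1).add
        ((hasDerivAt_pow 4 t).div_const 24)).sub (Real.hasDerivAt_cos t)
      convert! h using 1
      norm_num
      ring
    have hm : MonotoneOn (fun t : ℝ => 1 - t ^ 2 / 2 + t ^ 4 / 24 - Real.cos t) (Set.Ici 0) := by
      refine monotoneOn_of_hasDerivWithinAt_nonneg (convex_Ici 0)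
        (fun t _ => (hd t).continuousAt.continuousWithinAt)
        (fun t _ => (hd t).hasDerivWithinAt) ?_
      intro t ht
      rw [interior_Ici] at ht
      have := Real.sin_ge_sub_cube (le_of_lt ht)
      linarith
    have := hm (Set.mem_Ici.2 le_rfl) (Set.mem_Ici.2 hz) hz
    simp at this
    linarith
  rcases le_total 0 y with hy | hy
  · exact key y hy
  · have := key (-y) (by linarith)
    rw [Real.cos_neg] at this
    simpa [Even.neg_pow (by decide : Even 2), Even.neg_pow (by decide : Even 4)] using this

lemma exp_neg_le_quadratic {z : ℝ} (hz : 0 ≤ z) : Real.exp (-z) ≤ 1 - z + z ^ 2 / 2 := by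
  have h1 : 1 + z + z ^ 2 / 2 ≤ Real.exp z := Real.quadratic_le_exp_of_nonneg hz
  have h2 : (0 : ℝ) < 1 + z + z ^ 2 / 2 := by positivity
  rw [Real.exp_neg]
  calc (Real.exp z)⁻¹ ≤ (1 + z + z ^ 2 / 2)⁻¹ := inv_anti₀ h2 h1
    _ ≤ 1 - z + z ^ 2 / 2 := by
      rw [inv_le_iff_one_le_mul₀ h2]
      nlinarith [sq_nonneg (z ^ 2)]

lemma abs_cos_sub_cos_le_sq_sub_sq {a b : ℝ} (ha : 0 ≤ a) (hab : a ≤ b) :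
    |Real.cos a - Real.cos b| ≤ (b ^ 2 - a ^ 2) / 2 := by
  rw [Real.cos_sub_cos, abs_mul, abs_mul]
  have h1 : |Real.sin ((a + b) / 2)| ≤ (a + b) / 2 :=
    Real.abs_sin_le_abs.trans (abs_of_nonneg (by linarith)).le
  have h2 : |Real.sin ((a - b) / 2)| ≤ (b - a) / 2 := by
    refine Real.abs_sin_le_abs.trans ?_
    rw [abs_of_nonpos (by linarith)]
    linarith
  have := mul_le_mul h1 h2 (abs_nonneg _) (by linarith)
  norm_num
  nlinarith

/-- The imaginary part of the characteristic function of a centred Bernoulli variable. -/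
lemma abs_mul_sin_sub_mul_sin_le {p : ℝ} (hp : 0 ≤ p) (hp' : p ≤ 1 / 2) (t : ℝ) :
    |p * Real.sin ((1 - p) * t) - (1 - p) * Real.sin (p * t)| ≤
      p * (1 - p) * (1 - 2 * p) * |t| ^ 3 / 6 := by
  have key : ∀ z : ℝ, 0 ≤ z → |p * Real.sin ((1 - p) * z) - (1 - p) * Real.sin (p * z)| ≤
      p * (1 - p) * (1 - 2 * p) * z ^ 3 / 6 := by
    intro z hz
    have hd : ∀ t : ℝ, HasDerivAt
        (fun t : ℝ => p * Real.sin ((1 - p) * t) - (1 - p) * Real.sin (p * t))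
        (p * (1 - p) * (Real.cos ((1 - p) * t) - Real.cos (p * t))) t := by
      intro t
      have h := ((((hasDerivAt_id t).const_mul (1 - p)).sin).const_mul p).sub
        ((((hasDerivAt_id t).const_mul p).sin).const_mul (1 - p))
      convert! h using 1
      simp
      ring
    have hB : ∀ t : ℝ, HasDerivAt (fun t : ℝ => p * (1 - p) * (1 - 2 * p) * t ^ 3 / 6)
        (p * (1 - p) * ((1 - 2 * p) * t ^ 2 / 2)) t := by
      intro t
      have h := (((hasDerivAt_pow 3 t).const_mul (p * (1 - p) * (1 - 2 * p))).div_const 6)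
      convert! h using 1
      norm_num
      ring
    have := image_norm_le_of_norm_deriv_right_le_deriv_boundary (a := 0) (b := z)
      (f := fun t : ℝ => p * Real.sin ((1 - p) * t) - (1 - p) * Real.sin (p * t))
      (fun t _ => (hd t).continuousAt.continuousWithinAt)
      (fun t _ => (hd t).hasDerivWithinAt) (by simp) (fun t => hB t) ?_
      (Set.right_mem_Icc.2 hz)
    · simpa using this
    · intro t ht
      have h := abs_cos_sub_cos_le_sq_sub_sq (a := p * t) (b := (1 - p) * t)
        (mul_nonneg hp ht.1) (mul_le_mul_of_nonneg_right (by linarith) ht.1)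
      rw [abs_sub_comm] at h
      rw [Real.norm_eq_abs, abs_mul, abs_of_nonneg (mul_nonneg hp (by linarith))]
      refine mul_le_mul_of_nonneg_left (h.trans (le_of_eq ?_)) (mul_nonneg hp (by linarith))
      ring
  rcases le_total 0 t with ht | ht
  · rw [abs_of_nonneg ht]
    exact key t ht
  · have := key (-t) (by linarith)
    rw [abs_of_nonpos ht]
    rw [mul_neg, mul_neg, Real.sin_neg, Real.sin_neg] at this
    rwa [← abs_neg, show -(p * Real.sin ((1 - p) * t) - (1 - p) * Real.sin (p * t)) =
      p * -Real.sin ((1 - p) * t) - (1 - p) * -Real.sin (p * t) by ring]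

/-- The real part of the characteristic function of a centred Bernoulli variable. -/
lemma abs_mul_cos_add_mul_cos_sub_exp_le {p : ℝ} (hp : 0 ≤ p) (hp' : p ≤ 1 / 2) (t : ℝ) :
    |(1 - p) * Real.cos (p * t) + p * Real.cos ((1 - p) * t) -
        Real.exp (-(p * (1 - p) * t ^ 2 / 2))| ≤
      p * (1 - p) * (1 - p * (1 - p)) * t ^ 4 / 24 := by
  have hv : 0 ≤ p * (1 - p) := mul_nonneg hp (by linarith)
  have hv' : p * (1 - p) ≤ 1 / 4 := by nlinarith [sq_nonneg (p - 1 / 2)]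
  have hq : 0 ≤ 1 - p := by linarith
  have e1 : 1 - p * (1 - p) * t ^ 2 / 2 ≤ Real.exp (-(p * (1 - p) * t ^ 2 / 2)) :=
    Real.one_sub_le_exp_neg _
  have e2 := exp_neg_le_quadratic (z := p * (1 - p) * t ^ 2 / 2) (by positivity)
  have c1 := mul_le_mul_of_nonneg_left (cos_le_one_sub_sq_add_pow_four (p * t)) hq
  have c2 := mul_le_mul_of_nonneg_left (cos_le_one_sub_sq_add_pow_four ((1 - p) * t)) hp
  have c3 := mul_le_mul_of_nonneg_left (Real.one_sub_sq_div_two_le_cos (x := p * t)) hq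
  have c4 := mul_le_mul_of_nonneg_left (Real.one_sub_sq_div_two_le_cos (x := (1 - p) * t)) hp
  have hvt : 0 ≤ p * (1 - p) * t ^ 4 := by positivity
  have hvvt : 0 ≤ p * (1 - p) * t ^ 4 * (p * (1 - p)) := by positivity
  have hw : 0 ≤ p * (1 - p) * t ^ 4 * (1 / 4 - p * (1 - p)) :=
    mul_nonneg hvt (by linarith)
  rw [abs_le]
  constructor
  · nlinarith
  · nlinarith

/-- The characteristic function of a centred Bernoulli variable with parameter `p`. -/
noncomputable def centredCharFun (p t : ℝ) : ℂ :=
  ((1 - p : ℝ) : ℂ) * Complex.exp ((-(p * t) : ℝ) * Complex.I) +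
    (p : ℂ) * Complex.exp (((1 - p) * t : ℝ) * Complex.I)

lemma centredCharFun_re (p t : ℝ) : (centredCharFun p t).re =
    (1 - p) * Real.cos (p * t) + p * Real.cos ((1 - p) * t) := by
  rw [centredCharFun, Complex.add_re, Complex.re_ofReal_mul, Complex.re_ofReal_mul,
    Complex.exp_ofReal_mul_I_re, Complex.exp_ofReal_mul_I_re, Real.cos_neg]

lemma centredCharFun_im (p t : ℝ) : (centredCharFun p t).im =
    p * Real.sin ((1 - p) * t) - (1 - p) * Real.sin (p * t) := by
  rw [centredCharFun, Complex.add_im, Complex.im_ofReal_mul, Complex.im_ofReal_mul,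
    Complex.exp_ofReal_mul_I_im, Complex.exp_ofReal_mul_I_im, Real.sin_neg]
  ring

lemma norm_centredCharFun_sq (p t : ℝ) :
    ‖centredCharFun p t‖ ^ 2 = 1 - 2 * (p * (1 - p)) * (1 - Real.cos t) := by
  rw [Complex.sq_norm, Complex.normSq_apply, centredCharFun_re, centredCharFun_im]
  have h : Real.cos t = Real.cos (p * t) * Real.cos ((1 - p) * t) -
      Real.sin (p * t) * Real.sin ((1 - p) * t) := by
    rw [← Real.cos_add]
    ring_nf
  rw [h]
  linear_combination (1 - p) ^ 2 * Real.sin_sq_add_cos_sq (p * t) +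
    p ^ 2 * Real.sin_sq_add_cos_sq ((1 - p) * t)

lemma norm_centredCharFun_le {p t : ℝ} (hp : 0 ≤ p) (hp' : p ≤ 1) (ht : |t| ≤ Real.pi) :
    ‖centredCharFun p t‖ ≤ Real.exp (-(2 * (p * (1 - p)) * t ^ 2 / Real.pi ^ 2)) := by
  have hv : 0 ≤ p * (1 - p) := mul_nonneg hp (by linarith)
  rw [← pow_le_pow_iff_left₀ (norm_nonneg _) (Real.exp_pos _).le two_ne_zero]
  rw [norm_centredCharFun_sq, ← Real.exp_nat_mul]
  have h1 := Real.cos_le_one_sub_mul_cos_sq ht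
  have h2 := Real.one_sub_le_exp_neg (4 * (p * (1 - p)) * t ^ 2 / Real.pi ^ 2)
  have h3 := mul_le_mul_of_nonneg_left h1 hv
  calc 1 - 2 * (p * (1 - p)) * (1 - Real.cos t)
      ≤ 1 - 4 * (p * (1 - p)) * t ^ 2 / Real.pi ^ 2 := by
        have : p * (1 - p) * (1 - 2 / Real.pi ^ 2 * t ^ 2) =
          p * (1 - p) - (4 * (p * (1 - p)) * t ^ 2 / Real.pi ^ 2) / 2 := by ring
        linarith
    _ ≤ _ := h2
    _ = _ := by
      congr 1
      push_cast
      ring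

lemma norm_centredCharFun_sub_exp_le {p t : ℝ} (hp : 0 ≤ p) (hp' : p ≤ 1 / 2)
    (ht : |t| ≤ Real.pi) :
    ‖centredCharFun p t - (Real.exp (-(p * (1 - p) * t ^ 2 / 2)) : ℝ)‖ ≤
      p * (1 - p) * ((1 - 2 * p) / 6 + Real.pi * (1 - p * (1 - p)) / 24) * |t| ^ 3 := by
  have hv : 0 ≤ p * (1 - p) := mul_nonneg hp (by linarith)
  have hv' : p * (1 - p) ≤ 1 / 4 := by nlinarith [sq_nonneg (p - 1 / 2)]
  refine (Complex.norm_le_abs_re_add_abs_im _).trans ?_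
  rw [Complex.sub_re, Complex.sub_im, Complex.ofReal_re, Complex.ofReal_im, sub_zero,
    centredCharFun_re, centredCharFun_im]
  have h1 := abs_mul_sin_sub_mul_sin_le hp hp' t
  have h2 := abs_mul_cos_add_mul_cos_sub_exp_le hp hp' t
  have h3 : t ^ 4 ≤ Real.pi * |t| ^ 3 := by
    rw [← Even.pow_abs (by decide : Even 4) t, pow_succ' _ 3]
    exact mul_le_mul_of_nonneg_right ht (by positivity)
  have h4 := mul_le_mul_of_nonneg_left h3
    (mul_nonneg hv (by linarith : 0 ≤ 1 - p * (1 - p)))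
  linarith

lemma norm_pow_succ_sub_pow_succ_le {w g : ℂ} {b : ℝ} (hw : ‖w‖ ≤ b) (hg : ‖g‖ ≤ b) (N : ℕ) :
    ‖w ^ (N + 1) - g ^ (N + 1)‖ ≤ (N + 1) * ‖w - g‖ * b ^ N := by
  have hb : 0 ≤ b := (norm_nonneg _).trans hw
  induction N with
  | zero => simp
  | succ N ih =>
    have : w ^ (N + 1 + 1) - g ^ (N + 1 + 1) =
      w * (w ^ (N + 1) - g ^ (N + 1)) + (w - g) * g ^ (N + 1) := by ring
    rw [this]
    refine (norm_add_le _ _).trans ?_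
    rw [norm_mul, norm_mul, norm_pow]
    have h1 := mul_le_mul hw ih (norm_nonneg _) hb
    have h2 := mul_le_mul_of_nonneg_left (pow_le_pow_left₀ (norm_nonneg _) hg (N + 1))
      (norm_nonneg (w - g))
    refine (add_le_add h1 h2).trans (le_of_eq ?_)
    push_cast
    ring

lemma norm_exp_sub_centredCharFun_le {p s t : ℝ} (hp : 0 ≤ p) (hp' : p ≤ 1 / 2)
    (hs : s = 0 ∨ s = 1) :
    ‖Complex.exp (((s - p) * t : ℝ) * Complex.I) - centredCharFun p t‖ ≤ (1 - p) * |t| := by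
  have key : ‖Complex.exp (((1 - p) * t : ℝ) * Complex.I) -
      Complex.exp ((-(p * t) : ℝ) * Complex.I)‖ ≤ |t| := by
    have : Complex.exp (((1 - p) * t : ℝ) * Complex.I) -
        Complex.exp ((-(p * t) : ℝ) * Complex.I) =
        Complex.exp ((-(p * t) : ℝ) * Complex.I) * (Complex.exp (Complex.I * (t : ℝ)) - 1) := by
      rw [mul_sub, ← Complex.exp_add, mul_one]
      congr 2
      push_cast
      ring
    rw [this, norm_mul, Complex.norm_exp_ofReal_mul_I, one_mul]
    exact Real.norm_exp_I_mul_ofReal_sub_one_le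
  rcases hs with rfl | rfl
  · have : Complex.exp (((0 - p) * t : ℝ) * Complex.I) - centredCharFun p t =
        -((p : ℂ) * (Complex.exp (((1 - p) * t : ℝ) * Complex.I) -
          Complex.exp ((-(p * t) : ℝ) * Complex.I))) := by
      rw [centredCharFun, show (0 - p) * t = -(p * t) by ring]
      push_cast
      ring
    rw [this, norm_neg, norm_mul, Complex.norm_of_nonneg hp]
    have := mul_le_mul_of_nonneg_left key hp
    nlinarith [abs_nonneg t]
  · have : Complex.exp (((1 - p) * t : ℝ) * Complex.I) - centredCharFun p t =
        (((1 - p : ℝ) : ℂ) * (Complex.exp (((1 - p) * t : ℝ) * Complex.I) -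
          Complex.exp ((-(p * t) : ℝ) * Complex.I))) := by
      rw [centredCharFun]
      push_cast
      ring
    rw [this, norm_mul, Complex.norm_of_nonneg (by linarith)]
    exact mul_le_mul_of_nonneg_left key (by linarith)

lemma norm_exp_mul_centredCharFun_pow_sub_le {p s t : ℝ} (hp : 0 ≤ p) (hp' : p ≤ 1 / 2)
    (hs : s = 0 ∨ s = 1) (ht : |t| ≤ Real.pi) (N : ℕ) :
    ‖Complex.exp (((s - p) * t : ℝ) * Complex.I) * centredCharFun p t ^ N -
        (Real.exp (-((N + 1) * (p * (1 - p)) / 2 * t ^ 2)) : ℝ)‖ ≤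
      (1 - p) * (|t| * Real.exp (-(2 * N * (p * (1 - p)) / Real.pi ^ 2 * t ^ 2))) +
      (N + 1) * (p * (1 - p)) * ((1 - 2 * p) / 6 + Real.pi * (1 - p * (1 - p)) / 24) *
        (|t| ^ 3 * Real.exp (-(2 * N * (p * (1 - p)) / Real.pi ^ 2 * t ^ 2))) := by
  have hv : 0 ≤ p * (1 - p) := mul_nonneg hp (by linarith)
  set b := Real.exp (-(2 * (p * (1 - p)) * t ^ 2 / Real.pi ^ 2)) with hb
  set g := Real.exp (-(p * (1 - p) * t ^ 2 / 2)) with hg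
  have hbN : Real.exp (-(2 * N * (p * (1 - p)) / Real.pi ^ 2 * t ^ 2)) = b ^ N := by
    rw [hb, ← Real.exp_nat_mul]
    congr 1
    ring
  have hgN : Real.exp (-((N + 1) * (p * (1 - p)) / 2 * t ^ 2)) = g ^ (N + 1) := by
    rw [hg, ← Real.exp_nat_mul]
    congr 1
    push_cast
    ring
  have hwb := norm_centredCharFun_le hp (by linarith) ht
  have hgb : ‖(g : ℂ)‖ ≤ b := by
    rw [Complex.norm_of_nonneg (Real.exp_pos _).le, hb, Real.exp_le_exp, neg_le_neg_iff,
      div_le_div_iff₀ (by positivity) two_pos]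
    have : (2 : ℝ) ^ 2 ≤ Real.pi ^ 2 := pow_le_pow_left₀ two_pos.le Real.two_le_pi 2
    nlinarith [mul_nonneg hv (sq_nonneg t)]
  rw [hbN, hgN]
  have e : Complex.exp (((s - p) * t : ℝ) * Complex.I) * centredCharFun p t ^ N -
      ((g ^ (N + 1) : ℝ) : ℂ) =
      (Complex.exp (((s - p) * t : ℝ) * Complex.I) - centredCharFun p t) * centredCharFun p t ^ N +
      (centredCharFun p t ^ (N + 1) - (g : ℂ) ^ (N + 1)) := by
    push_cast
    ring
  rw [e]
  refine (norm_add_le _ _).trans (add_le_add ?_ ?_)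
  · rw [norm_mul, norm_pow, ← mul_assoc]
    exact mul_le_mul (norm_exp_sub_centredCharFun_le hp hp' hs)
      (pow_le_pow_left₀ (norm_nonneg _) hwb N) (by positivity)
      (mul_nonneg (by linarith) (abs_nonneg t))
  · refine (norm_pow_succ_sub_pow_succ_le hwb hgb N).trans ?_
    have h := norm_centredCharFun_sub_exp_le hp hp' ht
    have h2 := mul_le_mul_of_nonneg_left h
      (by positivity : (0 : ℝ) ≤ (N + 1) * b ^ N)
    linarith

/-- The probability that a binomial variable with parameters `n` and `p` equals `j`. -/
noncomputable def binomMass (n : ℕ) (p : ℝ) (j : ℕ) : ℝ :=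
  n.choose j * p ^ j * (1 - p) ^ (n - j)

lemma integral_exp_int_mul_I (m : ℤ) :
    ∫ t in (-Real.pi)..Real.pi, Complex.exp ((m : ℂ) * Complex.I * t) =
      if m = 0 then ((2 * Real.pi : ℝ) : ℂ) else 0 := by
  split_ifs with h
  · subst h
    simp
    ring
  · rw [integral_exp_mul_complex (by simpa using h)]
    have : Complex.exp ((m : ℂ) * Complex.I * (Real.pi : ℝ)) =
        Complex.exp ((m : ℂ) * Complex.I * (-Real.pi : ℝ)) := by
      rw [Complex.exp_eq_exp_iff_exists_int]
      exact ⟨m, by push_cast; ring⟩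
    rw [this, sub_self, zero_div]

/-- Fourier inversion for the binomial distribution. -/
lemma integral_exp_mul_centredCharFun_pow (p : ℝ) (N j : ℕ) :
    ∫ t in (-Real.pi)..Real.pi,
      Complex.exp (((N * p - j) * t : ℝ) * Complex.I) * centredCharFun p t ^ N =
      ((2 * Real.pi * binomMass N p j : ℝ) : ℂ) := by
  have key : ∀ t : ℝ,
      Complex.exp (((N * p - j) * t : ℝ) * Complex.I) * centredCharFun p t ^ N =
      ∑ m ∈ Finset.range (N + 1), (binomMass N p m : ℂ) *
        Complex.exp (((m : ℤ) - (j : ℤ) : ℤ) * Complex.I * t) := by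
    intro t
    have hw : centredCharFun p t = Complex.exp ((-(p * t) : ℝ) * Complex.I) *
        ((p : ℂ) * Complex.exp (t * Complex.I) + ((1 - p : ℝ) : ℂ)) := by
      rw [centredCharFun, mul_add, mul_left_comm, ← Complex.exp_add, add_comm, mul_comm (_ : ℂ)
        (Complex.exp ((-(p * t) : ℝ) * Complex.I))]
      congr 4
      push_cast
      ring
    rw [hw, mul_pow, add_pow, Finset.mul_sum, Finset.mul_sum]
    refine Finset.sum_congr rfl fun m _ => ?_
    rw [mul_pow, ← Complex.exp_nat_mul, ← Complex.exp_nat_mul, binomMass]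
    have : Complex.exp (((m : ℤ) - (j : ℤ) : ℤ) * Complex.I * t) =
        Complex.exp (((N * p - j) * t : ℝ) * Complex.I) *
        (Complex.exp (N * ((-(p * t) : ℝ) * Complex.I)) *
          Complex.exp (m * (t * Complex.I))) := by
      rw [← Complex.exp_add, ← Complex.exp_add]
      congr 1
      push_cast
      ring
    rw [this]
    push_cast
    ring
  simp_rw [key]
  rw [intervalIntegral.integral_finsetSum]
  · simp_rw [intervalIntegral.integral_const_mul, integral_exp_int_mul_I]
    by_cases hj : j ∈ Finset.range (N + 1)
    · rw [Finset.sum_eq_single_of_mem j hj]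
      · simp
        ring
      · intro m _ hm
        rw [if_neg, mul_zero]
        omega
    · rw [Finset.sum_eq_zero]
      · have : N.choose j = 0 := Nat.choose_eq_zero_of_lt (by simpa using hj)
        simp [binomMass, this]
      · intro m hm
        rw [if_neg, mul_zero]
        rintro h
        have : m = j := by omega
        exact hj (this ▸ hm)
  · intro m _
    exact (by fun_prop : Continuous _).intervalIntegrable _ _

lemma integral_exp_mul_gaussian {c : ℝ} (hc : 0 < c) (y : ℝ) :
    ∫ t : ℝ, Complex.exp ((-y * t : ℝ) * Complex.I) * (Real.exp (-(c * t ^ 2)) : ℝ) =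
      ((Real.sqrt (Real.pi / c) * Real.exp (-y ^ 2 / (4 * c)) : ℝ) : ℂ) := by
  have h := fourierIntegral_gaussian (b := (c : ℂ)) (by simpa using hc) ((-y : ℝ) : ℂ)
  convert! h using 1
  · congr 1
    ext t
    push_cast
    congr 2 <;> ring
  · push_cast
    rw [Real.sqrt_eq_rpow, Complex.ofReal_cpow (by positivity)]
    push_cast
    congr 2
    ring

lemma integrable_exp_mul_gaussian {c : ℝ} (hc : 0 < c) (y : ℝ) :
    MeasureTheory.Integrable fun t : ℝ =>
      Complex.exp ((-y * t : ℝ) * Complex.I) * (Real.exp (-(c * t ^ 2)) : ℝ) := by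
  refine (integrable_exp_neg_mul_sq hc).mono'
    (by fun_prop : Continuous _).aestronglyMeasurable (Filter.Eventually.of_forall fun t => ?_)
  rw [norm_mul, Complex.norm_exp_ofReal_mul_I, one_mul,
    Complex.norm_of_nonneg (Real.exp_pos _).le, neg_mul]

lemma norm_integral_sub_integral_gaussian_le {c : ℝ} (hc : 0 < c) (y : ℝ) :
    ‖(∫ t : ℝ, Complex.exp ((-y * t : ℝ) * Complex.I) * (Real.exp (-(c * t ^ 2)) : ℝ)) -
      ∫ t in (-Real.pi)..Real.pi,
        Complex.exp ((-y * t : ℝ) * Complex.I) * (Real.exp (-(c * t ^ 2)) : ℝ)‖ ≤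
      2 * (Real.exp (-(c * Real.pi ^ 2)) / (c * Real.pi)) := by
  set F : ℝ → ℂ := fun t =>
    Complex.exp ((-y * t : ℝ) * Complex.I) * (Real.exp (-(c * t ^ 2)) : ℝ) with hF
  have hint : MeasureTheory.Integrable F := integrable_exp_mul_gaussian hc y
  have hnorm : ∀ t, ‖F t‖ = Real.exp (-(c * t ^ 2)) := by
    intro t
    rw [hF, norm_mul, Complex.norm_exp_ofReal_mul_I, one_mul,
      Complex.norm_of_nonneg (Real.exp_pos _).le]
  have hcp : 0 < c * Real.pi := mul_pos hc Real.pi_pos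
  have hR : ‖∫ t in Set.Ioi Real.pi, F t‖ ≤ Real.exp (-(c * Real.pi ^ 2)) / (c * Real.pi) := by
    refine (MeasureTheory.norm_integral_le_of_norm_le
      (integrableOn_exp_mul_Ioi (neg_lt_zero.2 hcp) Real.pi) ?_).trans_eq ?_
    · refine (MeasureTheory.ae_restrict_mem measurableSet_Ioi).mono fun t ht => ?_
      rw [hnorm, Real.exp_le_exp]
      nlinarith [mul_nonneg (mul_nonneg hc.le (Real.pi_pos.le.trans (Set.mem_Ioi.1 ht).le))
        (sub_nonneg.2 (Set.mem_Ioi.1 ht).le)]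
    · rw [integral_exp_mul_Ioi (neg_lt_zero.2 hcp), neg_div_neg_eq]
      congr 2
      ring
  have hL : ‖∫ t in Set.Iic (-Real.pi), F t‖ ≤
      Real.exp (-(c * Real.pi ^ 2)) / (c * Real.pi) := by
    refine (MeasureTheory.norm_integral_le_of_norm_le
      (integrableOn_exp_mul_Iic hcp (-Real.pi)) ?_).trans_eq ?_
    · refine (MeasureTheory.ae_restrict_mem measurableSet_Iic).mono fun t ht => ?_
      rw [hnorm, Real.exp_le_exp]
      have ht' : Real.pi ≤ -t := by linarith [Set.mem_Iic.1 ht]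
      nlinarith [mul_nonneg (mul_nonneg hc.le (Real.pi_pos.le.trans ht'))
        (sub_nonneg.2 ht')]
    · rw [integral_exp_mul_Iic hcp]
      congr 2
      ring
  have hsplit : (∫ t, F t) - ∫ t in (-Real.pi)..Real.pi, F t =
      (∫ t in Set.Iic (-Real.pi), F t) + ∫ t in Set.Ioi Real.pi, F t := by
    have h1 := intervalIntegral.integral_Iic_sub_Iic (μ := MeasureTheory.volume)
      (hint.integrableOn (s := Set.Iic (-Real.pi))) (hint.integrableOn (s := Set.Iic Real.pi))
    have h2 := intervalIntegral.integral_Iic_add_Ioi (μ := MeasureTheory.volume) (b := Real.pi)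
      hint.integrableOn hint.integrableOn
    rw [← h1, ← h2]
    ring
  rw [hsplit]
  refine (norm_add_le _ _).trans ?_
  linarith

lemma integral_mul_exp_neg_mul_sq_le {a : ℝ} (ha : 0 < a) :
    ∫ t in (-Real.pi)..Real.pi, |t| * Real.exp (-(a * t ^ 2)) ≤ 1 / a := by
  have hcont : Continuous fun t : ℝ => |t| * Real.exp (-(a * t ^ 2)) := by fun_prop
  have hR : ∫ t in (0 : ℝ)..Real.pi, |t| * Real.exp (-(a * t ^ 2)) ≤ 1 / (2 * a) := by
    have hd : ∀ t ∈ Set.uIcc 0 Real.pi,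
        HasDerivAt (fun t : ℝ => -(Real.exp (-(a * t ^ 2)) / (2 * a)))
          (|t| * Real.exp (-(a * t ^ 2))) t := by
      intro t ht
      rw [Set.uIcc_of_le Real.pi_pos.le] at ht
      rw [abs_of_nonneg ht.1]
      have h := ((((hasDerivAt_pow 2 t).const_mul a).neg.exp).div_const (2 * a)).neg
      convert! h using 1
      simp only [Pi.neg_apply]
      generalize Real.exp (-(a * t ^ 2)) = e
      field_simp
      norm_num
      ring
    rw [intervalIntegral.integral_eq_sub_of_hasDerivAt hd (hcont.intervalIntegrable _ _)]
    have : 0 < Real.exp (-(a * Real.pi ^ 2)) / (2 * a) := by positivity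
    simp only [ne_eq, OfNat.ofNat_ne_zero, not_false_eq_true, zero_pow, mul_zero, neg_zero,
      Real.exp_zero]
    linarith
  have hL : ∫ t in (-Real.pi)..0, |t| * Real.exp (-(a * t ^ 2)) =
      ∫ t in (0 : ℝ)..Real.pi, |t| * Real.exp (-(a * t ^ 2)) := by
    have := intervalIntegral.integral_comp_neg (a := 0) (b := Real.pi)
      (fun t : ℝ => |t| * Real.exp (-(a * t ^ 2)))
    simpa using this.symm
  rw [← intervalIntegral.integral_add_adjacent_intervals (b := 0)
    (hcont.intervalIntegrable _ _) (hcont.intervalIntegrable _ _), hL]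
  have : 1 / (2 * a) + 1 / (2 * a) = 1 / a := by field_simp; norm_num
  linarith

lemma integral_cube_mul_exp_neg_mul_sq_le {a : ℝ} (ha : 0 < a) :
    ∫ t in (-Real.pi)..Real.pi, |t| ^ 3 * Real.exp (-(a * t ^ 2)) ≤ 1 / a ^ 2 := by
  have hcont : Continuous fun t : ℝ => |t| ^ 3 * Real.exp (-(a * t ^ 2)) := by fun_prop
  have hR : ∫ t in (0 : ℝ)..Real.pi, |t| ^ 3 * Real.exp (-(a * t ^ 2)) ≤ 1 / (2 * a ^ 2) := by
    have hd : ∀ t ∈ Set.uIcc 0 Real.pi,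
        HasDerivAt (fun t : ℝ => -((a * t ^ 2 + 1) * Real.exp (-(a * t ^ 2)) / (2 * a ^ 2)))
          (|t| ^ 3 * Real.exp (-(a * t ^ 2))) t := by
      intro t ht
      rw [Set.uIcc_of_le Real.pi_pos.le] at ht
      rw [abs_of_nonneg ht.1]
      have h := (((((hasDerivAt_pow 2 t).const_mul a).add_const 1).mul
        (((hasDerivAt_pow 2 t).const_mul a).neg.exp)).div_const (2 * a ^ 2)).neg
      convert! h using 1
      simp only [Pi.neg_apply]
      generalize Real.exp (-(a * t ^ 2)) = e
      field_simp
      norm_num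
      ring
    rw [intervalIntegral.integral_eq_sub_of_hasDerivAt hd (hcont.intervalIntegrable _ _)]
    have : 0 < (a * Real.pi ^ 2 + 1) * Real.exp (-(a * Real.pi ^ 2)) / (2 * a ^ 2) := by
      positivity
    simp only [ne_eq, OfNat.ofNat_ne_zero, not_false_eq_true, zero_pow, mul_zero, neg_zero,
      Real.exp_zero, zero_add, mul_one]
    linarith
  have hL : ∫ t in (-Real.pi)..0, |t| ^ 3 * Real.exp (-(a * t ^ 2)) =
      ∫ t in (0 : ℝ)..Real.pi, |t| ^ 3 * Real.exp (-(a * t ^ 2)) := by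
    have := intervalIntegral.integral_comp_neg (a := 0) (b := Real.pi)
      (fun t : ℝ => |t| ^ 3 * Real.exp (-(a * t ^ 2)))
    simpa using this.symm
  rw [← intervalIntegral.integral_add_adjacent_intervals (b := 0)
    (hcont.intervalIntegrable _ _) (hcont.intervalIntegrable _ _), hL]
  have : 1 / (2 * a ^ 2) + 1 / (2 * a ^ 2) = 1 / a ^ 2 := by field_simp; norm_num
  linarith

/-- The standard normal density. -/
noncomputable def stdNormalPdf (x : ℝ) : ℝ :=
  (Real.sqrt (2 * Real.pi))⁻¹ * Real.exp (-x ^ 2 / 2)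

lemma stdNormalPdf_pos (x : ℝ) : 0 < stdNormalPdf x := by
  have := Real.pi_pos
  unfold stdNormalPdf
  positivity

lemma inv_sqrt_two_pi_le : (Real.sqrt (2 * Real.pi))⁻¹ ≤ 0.399 := by
  have h : (1 / 0.399 : ℝ) ≤ Real.sqrt (2 * Real.pi) := by
    apply Real.le_sqrt_of_sq_le
    have := Real.pi_gt_d4
    norm_num
    linarith
  calc (Real.sqrt (2 * Real.pi))⁻¹ ≤ (1 / 0.399 : ℝ)⁻¹ := inv_anti₀ (by norm_num) h
    _ = 0.399 := by norm_num

lemma stdNormalPdf_le (x : ℝ) : stdNormalPdf x ≤ 0.399 := by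
  have h : Real.exp (-x ^ 2 / 2) ≤ 1 := Real.exp_le_one_iff.2 (by nlinarith [sq_nonneg x])
  calc stdNormalPdf x ≤ (Real.sqrt (2 * Real.pi))⁻¹ * 1 :=
        mul_le_mul_of_nonneg_left h (by positivity)
    _ ≤ 0.399 := by rw [mul_one]; exact inv_sqrt_two_pi_le

lemma abs_mul_stdNormalPdf_le (x : ℝ) : |x| * stdNormalPdf x ≤ 0.242 := by
  have hpi := Real.pi_gt_d4
  have he := Real.exp_one_gt_d9
  refine abs_le_of_sq_le_sq (?_ : (|x| * stdNormalPdf x) ^ 2 ≤ 0.242 ^ 2) (by norm_num)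
    |> (le_abs_self _).trans
  have h1 : (|x| * stdNormalPdf x) ^ 2 = x ^ 2 * Real.exp (-x ^ 2) / (2 * Real.pi) := by
    rw [stdNormalPdf, mul_pow, mul_pow, sq_abs, inv_pow, Real.sq_sqrt (by positivity),
      ← Real.exp_nat_mul]
    push_cast
    rw [show (2 : ℝ) * (-x ^ 2 / 2) = -x ^ 2 by ring]
    ring
  have h2 : x ^ 2 * Real.exp (-x ^ 2) ≤ Real.exp (-1) := Real.mul_exp_neg_le_exp_neg_one _
  rw [h1, div_le_iff₀ (by positivity)]
  refine h2.trans ?_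
  rw [Real.exp_neg, inv_le_iff_one_le_mul₀ (Real.exp_pos 1)]
  nlinarith

lemma norm_binomMass_sub_gaussian_le {p s : ℝ} (hp : 0 < p) (hp' : p ≤ 1 / 2)
    (hs : s = 0 ∨ s = 1) {N : ℕ} (hN : 0 < N) (j : ℕ) {a c y : ℝ}
    (ha : a = 2 * N * (p * (1 - p)) / Real.pi ^ 2) (hc : c = (N + 1) * (p * (1 - p)) / 2)
    (hy : y = j + s - (N + 1) * p) :
    |2 * Real.pi * binomMass N p j - Real.sqrt (Real.pi / c) * Real.exp (-y ^ 2 / (4 * c))| ≤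
      (1 - p) * (1 / a) +
      (N + 1) * (p * (1 - p)) * ((1 - 2 * p) / 6 + Real.pi * (1 - p * (1 - p)) / 24) *
        (1 / a ^ 2) +
      2 * (Real.exp (-(c * Real.pi ^ 2)) / (c * Real.pi)) := by
  have hv : 0 < p * (1 - p) := mul_pos hp (by linarith)
  have hv' : p * (1 - p) ≤ 1 / 4 := by nlinarith [sq_nonneg (p - 1 / 2)]
  have hN' : (0 : ℝ) < N := Nat.cast_pos.2 hN
  have hpi := Real.pi_pos
  have ha0 : 0 < a := by rw [ha]; positivity
  have hc0 : 0 < c := by rw [hc]; positivity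
  set F : ℝ → ℂ := fun t => Complex.exp (((N * p - j) * t : ℝ) * Complex.I) *
    centredCharFun p t ^ N with hF
  set G : ℝ → ℂ := fun t => Complex.exp ((-y * t : ℝ) * Complex.I) *
    (Real.exp (-(c * t ^ 2)) : ℝ) with hG
  have hFc : Continuous F := by
    simp only [hF, centredCharFun]
    fun_prop
  have hGc : Continuous G := by
    simp only [hG]
    fun_prop
  set C := (N + 1) * (p * (1 - p)) * ((1 - 2 * p) / 6 + Real.pi * (1 - p * (1 - p)) / 24) with hC
  have hC0 : 0 ≤ C := by
    have : 0 ≤ (1 - 2 * p) / 6 + Real.pi * (1 - p * (1 - p)) / 24 :=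
      add_nonneg (by linarith) (div_nonneg (mul_nonneg hpi.le (by linarith)) (by norm_num))
    positivity
  have hpt : ∀ t : ℝ, |t| ≤ Real.pi → ‖F t - G t‖ ≤
      (1 - p) * (|t| * Real.exp (-(a * t ^ 2))) + C * (|t| ^ 3 * Real.exp (-(a * t ^ 2))) := by
    intro t ht
    have h := norm_exp_mul_centredCharFun_pow_sub_le hp.le hp' hs ht N
    rw [← ha, ← hc, ← hC] at h
    refine le_trans (le_of_eq ?_) h
    have e : F t - G t = Complex.exp ((-y * t : ℝ) * Complex.I) *
        (Complex.exp (((s - p) * t : ℝ) * Complex.I) * centredCharFun p t ^ N -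
          (Real.exp (-(c * t ^ 2)) : ℝ)) := by
      have e0 : (N * p - j) * t = -y * t + (s - p) * t := by
        rw [hy]
        ring
      simp only [hF, hG]
      rw [e0, Complex.ofReal_add, add_mul, Complex.exp_add]
      ring
    rw [e, norm_mul, Complex.norm_exp_ofReal_mul_I, one_mul]
  have hcont1 : Continuous fun t : ℝ => (1 - p) * (|t| * Real.exp (-(a * t ^ 2))) := by fun_prop
  have hcont2 : Continuous fun t : ℝ => C * (|t| ^ 3 * Real.exp (-(a * t ^ 2))) := by fun_prop
  have h1 : ‖∫ t in (-Real.pi)..Real.pi, (F t - G t)‖ ≤ (1 - p) * (1 / a) + C * (1 / a ^ 2) := by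
    refine (intervalIntegral.norm_integral_le_of_norm_le (by linarith)
      (Filter.Eventually.of_forall fun t ht => hpt t (abs_le.2 ⟨ht.1.le, ht.2⟩))
      ((hcont1.add hcont2).intervalIntegrable _ _)).trans ?_
    rw [intervalIntegral.integral_add (hcont1.intervalIntegrable _ _)
      (hcont2.intervalIntegrable _ _), intervalIntegral.integral_const_mul,
      intervalIntegral.integral_const_mul]
    exact add_le_add
      (mul_le_mul_of_nonneg_left (integral_mul_exp_neg_mul_sq_le ha0) (by linarith))
      (mul_le_mul_of_nonneg_left (integral_cube_mul_exp_neg_mul_sq_le ha0) hC0)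
  rw [intervalIntegral.integral_sub (hFc.intervalIntegrable _ _) (hGc.intervalIntegrable _ _),
    integral_exp_mul_centredCharFun_pow] at h1
  have h2 := norm_integral_sub_integral_gaussian_le hc0 y
  rw [integral_exp_mul_gaussian hc0, norm_sub_rev] at h2
  have h3 := norm_add_le_of_le h1 h2
  rw [sub_add_sub_cancel, ← Complex.ofReal_sub, Complex.norm_real, Real.norm_eq_abs] at h3
  exact h3

lemma local_limit_error_le {p N V : ℝ} (hp : 0 < p) (hp' : p ≤ 1 / 2) (hN : 8 ≤ N)
    (hV : V = (N + 1) * (p * (1 - p))) :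
    V / (2 * Real.pi) * ((1 - p) * (1 / (2 * N * (p * (1 - p)) / Real.pi ^ 2)) +
      V * ((1 - 2 * p) / 6 + Real.pi * (1 - p * (1 - p)) / 24) *
        (1 / (2 * N * (p * (1 - p)) / Real.pi ^ 2) ^ 2) +
      2 * (Real.exp (-(V / 2 * Real.pi ^ 2)) / (V / 2 * Real.pi))) ≤ 0.516 / p := by
  have hq : 0 < 1 - p := by linarith
  have hv : 0 < p * (1 - p) := mul_pos hp hq
  have hv' : p * (1 - p) ≤ 1 / 4 := by nlinarith [sq_nonneg (p - 1 / 2)]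
  have hN0 : 0 < N := by linarith
  have hpi := Real.pi_pos
  have hpi4 := Real.pi_lt_d4
  have hpi3 := Real.pi_gt_three
  have hV0 : 0 < V := by rw [hV]; positivity
  set C := (1 - 2 * p) / 6 + Real.pi * (1 - p * (1 - p)) / 24 with hC
  have hC0 : 0 ≤ C :=
    add_nonneg (by linarith) (div_nonneg (mul_nonneg hpi.le (by linarith)) (by norm_num))
  have hC1 : C ≤ (1 - 2 * p) / 6 + 0.1309 * (1 - p * (1 - p)) := by
    have := mul_le_mul_of_nonneg_right hpi4.le (by linarith : 0 ≤ 1 - p * (1 - p))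
    rw [hC]
    linarith
  have hr : (N + 1) / N ≤ 9 / 8 := by
    rw [div_le_div_iff₀ hN0 (by norm_num)]
    linarith
  have hr0 : 0 ≤ (N + 1) / N := by positivity
  have hr2 : ((N + 1) / N) ^ 2 ≤ 81 / 64 := by
    have := pow_le_pow_left₀ hr0 hr 2
    linarith
  have hpi_cube : Real.pi ^ 3 ≤ 31.0067 := by
    have := pow_le_pow_left₀ hpi.le hpi4.le 3
    norm_num at this ⊢
    linarith
  have hpi_four : 81 ≤ Real.pi ^ 4 := by
    have := pow_le_pow_left₀ (by norm_num) hpi3.le 4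
    linarith
  have t1 : V / (2 * Real.pi) * ((1 - p) * (1 / (2 * N * (p * (1 - p)) / Real.pi ^ 2))) =
      (1 - p) * ((N + 1) / N) * (Real.pi / 4) := by
    rw [hV]
    field_simp
    norm_num
  have t2 : V / (2 * Real.pi) * (V * C * (1 / (2 * N * (p * (1 - p)) / Real.pi ^ 2) ^ 2)) =
      C * (((N + 1) / N) ^ 2) * (Real.pi ^ 3 / 8) := by
    rw [hV]
    field_simp
    norm_num
    ring
  have t3 : V / (2 * Real.pi) * (2 * (Real.exp (-(V / 2 * Real.pi ^ 2)) / (V / 2 * Real.pi))) =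
      2 / Real.pi ^ 2 * Real.exp (-(V / 2 * Real.pi ^ 2)) := by
    field_simp
  have b1 : (1 - p) * ((N + 1) / N) * (Real.pi / 4) ≤ (1 - p) * (9 / 8) * (3.1416 / 4) := by
    gcongr
  have b2 : C * (((N + 1) / N) ^ 2) * (Real.pi ^ 3 / 8) ≤
      ((1 - 2 * p) / 6 + 0.1309 * (1 - p * (1 - p))) * (81 / 64) * (31.0067 / 8) := by
    have : 0 ≤ (1 - 2 * p) / 6 + 0.1309 * (1 - p * (1 - p)) := hC0.trans hC1
    gcongr
  have b3 : p * (2 / Real.pi ^ 2 * Real.exp (-(V / 2 * Real.pi ^ 2))) ≤ 0.02 := by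
    have hz : 0 < V / 2 * Real.pi ^ 2 := by positivity
    have he : Real.exp (-(V / 2 * Real.pi ^ 2)) ≤ (V / 2 * Real.pi ^ 2)⁻¹ := by
      rw [Real.exp_neg]
      exact inv_anti₀ hz (by linarith [Real.add_one_le_exp (V / 2 * Real.pi ^ 2)])
    calc p * (2 / Real.pi ^ 2 * Real.exp (-(V / 2 * Real.pi ^ 2)))
        ≤ p * (2 / Real.pi ^ 2 * (V / 2 * Real.pi ^ 2)⁻¹) := by gcongr
      _ = 4 / ((N + 1) * (1 - p) * Real.pi ^ 4) := by
        rw [hV]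
        field_simp
        norm_num
      _ ≤ 4 / (9 * (1 / 2) * 81) := by
        gcongr
        · linarith
        · linarith
      _ ≤ 0.02 := by norm_num
  rw [le_div_iff₀ hp, mul_add, mul_add, t1, t2, t3]
  clear_value C
  have m1 := mul_le_mul_of_nonneg_left b1 hp.le
  have m2 := mul_le_mul_of_nonneg_left b2 hp.le
  have hp3 : p ^ 3 ≤ p ^ 2 / 2 := by nlinarith [sq_nonneg p]
  nlinarith [sq_nonneg (p - 0.41)]

lemma local_limit_bound_of_large {p s : ℝ} (hp : 0 < p) (hp' : p ≤ 1 / 2)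
    (hs : s = 0 ∨ s = 1) {N : ℕ} (hN : 8 ≤ N) (j : ℕ) :
    |(N + 1) * (p * (1 - p)) * binomMass N p j - Real.sqrt ((N + 1) * (p * (1 - p))) *
      stdNormalPdf ((j + s - (N + 1) * p) / Real.sqrt ((N + 1) * (p * (1 - p))))| ≤
      0.516 / p := by
  have hq : 0 < 1 - p := by linarith
  have hv : 0 < p * (1 - p) := mul_pos hp hq
  have hv' : p * (1 - p) ≤ 1 / 4 := by nlinarith [sq_nonneg (p - 1 / 2)]
  have hN' : (8 : ℝ) ≤ N := by exact_mod_cast hN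
  have hN0 : (0 : ℝ) < N := by linarith
  have hpi := Real.pi_pos
  set V := (N + 1) * (p * (1 - p)) with hV
  have hV0 : 0 < V := by positivity
  set y := j + s - (N + 1) * p with hy
  have h := norm_binomMass_sub_gaussian_le hp hp' hs (by omega : 0 < N) j rfl rfl hy
  rw [← hV] at h
  have e1 : Real.sqrt V * stdNormalPdf (y / Real.sqrt V) =
      V / (2 * Real.pi) * (Real.sqrt (Real.pi / (V / 2)) * Real.exp (-y ^ 2 / (4 * (V / 2)))) := by
    have e : -(y / Real.sqrt V) ^ 2 / 2 = -y ^ 2 / (4 * (V / 2)) := by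
      rw [div_pow, Real.sq_sqrt hV0.le]
      field_simp
      norm_num
    rw [stdNormalPdf, e, show Real.pi / (V / 2) = 2 * Real.pi / V by field_simp,
      Real.sqrt_div (by positivity), ← mul_assoc, ← mul_assoc]
    congr 1
    have s1 : Real.sqrt V ^ 2 = V := Real.sq_sqrt hV0.le
    have s2 : Real.sqrt (2 * Real.pi) ^ 2 = 2 * Real.pi := Real.sq_sqrt (by positivity)
    have s3 : 0 < Real.sqrt V := Real.sqrt_pos.2 hV0
    have s4 : 0 < Real.sqrt (2 * Real.pi) := Real.sqrt_pos.2 (by positivity)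
    have s5 : V / (2 * Real.pi) = Real.sqrt V ^ 2 / Real.sqrt (2 * Real.pi) ^ 2 := by rw [s1, s2]
    rw [s5]
    field_simp
  have e2 : V * binomMass N p j = V / (2 * Real.pi) * (2 * Real.pi * binomMass N p j) := by
    field_simp
  rw [e1, e2, ← mul_sub, abs_mul, abs_of_pos (by positivity : 0 < V / (2 * Real.pi))]
  refine (mul_le_mul_of_nonneg_left h (by positivity)).trans ?_
  exact local_limit_error_le hp hp' hN' hV

lemma binomMass_eq_eval (n : ℕ) (p : ℝ) (j : ℕ) :
    binomMass n p j = (bernsteinPolynomial ℝ n j).eval p := by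
  simp [binomMass, bernsteinPolynomial]

lemma binomMass_nonneg {p : ℝ} (hp : 0 ≤ p) (hp' : p ≤ 1) (n j : ℕ) : 0 ≤ binomMass n p j := by
  have : 0 ≤ 1 - p := by linarith
  unfold binomMass
  positivity

lemma sum_binomMass (n : ℕ) (p : ℝ) : ∑ i ∈ Finset.range (n + 1), binomMass n p i = 1 := by
  simp_rw [binomMass_eq_eval]
  rw [← Polynomial.eval_finsetSum, bernsteinPolynomial.sum, Polynomial.eval_one]

lemma binomMass_eq_zero {n j : ℕ} (h : n < j) (p : ℝ) : binomMass n p j = 0 := by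
  simp [binomMass, Nat.choose_eq_zero_of_lt h]

lemma sum_range_binomMass_le_one {p : ℝ} (hp : 0 ≤ p) (hp' : p ≤ 1) (n : ℕ) {s : Finset ℕ}
    (hs : s ⊆ Finset.range (n + 1)) : ∑ i ∈ s, binomMass n p i ≤ 1 := by
  rw [← sum_binomMass n p]
  exact Finset.sum_le_sum_of_subset_of_nonneg hs fun i _ _ => binomMass_nonneg hp hp' n i

lemma binomMass_le_one {p : ℝ} (hp : 0 ≤ p) (hp' : p ≤ 1) (n j : ℕ) : binomMass n p j ≤ 1 := by
  rcases le_or_gt j n with h | h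
  · simpa using sum_range_binomMass_le_one hp hp' n (s := {j}) (by simpa [Nat.lt_succ_iff] using h)
  · rw [binomMass_eq_zero h]
    exact zero_le_one

lemma binomMass_add_binomMass_succ_le_one {p : ℝ} (hp : 0 ≤ p) (hp' : p ≤ 1) (n j : ℕ) :
    binomMass n p j + binomMass n p (j + 1) ≤ 1 := by
  rcases le_or_gt (j + 1) n with h | h
  · have := sum_range_binomMass_le_one hp hp' n (s := {j, j + 1}) (by
      intro i hi
      simp only [Finset.mem_insert, Finset.mem_singleton] at hi
      rw [Finset.mem_range]
      omega)
    rwa [Finset.sum_pair (by omega)] at this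
  · rw [binomMass_eq_zero h, add_zero]
    exact binomMass_le_one hp hp' n j

lemma binomMass_succ_succ (n : ℕ) (p : ℝ) (j : ℕ) :
    binomMass (n + 1) p (j + 1) = p * binomMass n p j + (1 - p) * binomMass n p (j + 1) := by
  rcases lt_or_ge j n with h | h
  · obtain ⟨m, rfl⟩ := Nat.exists_eq_add_of_lt h
    rw [binomMass, binomMass, binomMass, Nat.choose_succ_succ,
      show j + m + 1 + 1 - (j + 1) = m + 1 by omega, show j + m + 1 - j = m + 1 by omega,
      show j + m + 1 - (j + 1) = m by omega]
    push_cast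
    ring
  · rw [binomMass_eq_zero (by omega : n < j + 1), binomMass, binomMass, Nat.choose_succ_succ,
      Nat.choose_eq_zero_of_lt (by omega : n < j + 1), Nat.add_sub_add_right]
    push_cast
    ring

lemma binomMass_succ_le {p : ℝ} (hp : 0 ≤ p) (hp' : p ≤ 1 / 2) (n j : ℕ) :
    binomMass (n + 1) p j ≤ 1 - p := by
  cases j with
  | zero =>
    have : (1 - p) ^ n ≤ 1 := pow_le_one₀ (by linarith) (by linarith)
    have := mul_le_mul_of_nonneg_right this (by linarith : 0 ≤ 1 - p)
    simpa [binomMass, pow_succ] using this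
  | succ j =>
    rw [binomMass_succ_succ]
    have h1 := binomMass_add_binomMass_succ_le_one hp (by linarith) n j
    have h2 := binomMass_nonneg hp (by linarith) n j
    nlinarith

/-- A quantitative local limit theorem for the binomial distribution. -/
lemma local_limit_bound {p s : ℝ} (hp : 0 < p) (hp' : p ≤ 1 / 2)
    (hs : s = 0 ∨ s = 1) (N j : ℕ) :
    |(N + 1) * (p * (1 - p)) * binomMass N p j - Real.sqrt ((N + 1) * (p * (1 - p))) *
      stdNormalPdf ((j + s - (N + 1) * p) / Real.sqrt ((N + 1) * (p * (1 - p))))| ≤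
      0.516 / p := by
  rcases le_or_gt 8 N with hN | hN
  · exact local_limit_bound_of_large hp hp' hs hN j
  have hN' : (N : ℝ) ≤ 7 := by exact_mod_cast Nat.lt_succ_iff.1 hN
  have hq : 0 < 1 - p := by linarith
  have hv : 0 < p * (1 - p) := mul_pos hp hq
  have hv' : p * (1 - p) ≤ 1 / 4 := by nlinarith [sq_nonneg (p - 1 / 2)]
  set V := (N + 1) * (p * (1 - p)) with hV
  have hV0 : 0 < V := by positivity
  have hV2 : V ≤ 2 := by nlinarith
  have hP := binomMass_nonneg hp.le (by linarith) N j
  have hmass : V * binomMass N p j ≤ 0.516 / p := by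
    rw [le_div_iff₀ hp]
    cases N with
    | zero =>
      have h1 := binomMass_le_one hp.le (by linarith : p ≤ 1) 0 j
      have hV1 : V ≤ 1 / 4 := by
        rw [hV]
        simpa using hv'
      nlinarith [mul_le_mul hV1 h1 hP (by norm_num)]
    | succ N =>
      have h1 := binomMass_succ_le hp.le hp' N j
      have h2 : V * binomMass (N + 1) p j ≤ 8 * (p * (1 - p)) * (1 - p) :=
        mul_le_mul (by rw [hV]; nlinarith) h1 hP (by positivity)
      have h3 := mul_le_mul_of_nonneg_right h2 hp.le
      have h4 : (p * (1 - p)) * (p * (1 - p)) ≤ 1 / 4 * (1 / 4) :=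
        mul_le_mul hv' hv' hv.le (by norm_num)
      nlinarith
  set x := (j + s - (N + 1) * p) / Real.sqrt V
  have hphi := stdNormalPdf_le x
  have hphi0 := stdNormalPdf_pos x
  have hsq : Real.sqrt V ≤ 1.5 := by
    rw [Real.sqrt_le_left (by norm_num)]
    norm_num
    linarith
  have hgauss : Real.sqrt V * stdNormalPdf x ≤ 0.516 / p := by
    rw [le_div_iff₀ hp]
    have h1 : Real.sqrt V * stdNormalPdf x ≤ 1.5 * 0.399 :=
      mul_le_mul hsq hphi hphi0.le (by norm_num)
    nlinarith
  have h1 : 0 ≤ V * binomMass N p j := mul_nonneg hV0.le hP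
  have h2 : 0 ≤ Real.sqrt V * stdNormalPdf x := mul_nonneg (Real.sqrt_nonneg _) hphi0.le
  rw [abs_le]
  constructor <;> linarith

lemma hasDerivAt_sum_binomMass (N m : ℕ) (p : ℝ) :
    HasDerivAt (fun p => ∑ i ∈ Finset.range (m + 1), binomMass (N + 1) p i)
      (-((N + 1) * binomMass N p m)) p := by
  simp_rw [binomMass_eq_eval, ← Polynomial.eval_finsetSum]
  have h : Polynomial.derivative (∑ i ∈ Finset.range (m + 1), bernsteinPolynomial ℝ (N + 1) i) =
      -((N + 1 : ℕ) * bernsteinPolynomial ℝ N m) := by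
    induction m with
    | zero =>
      simp [bernsteinPolynomial.derivative_zero]
      ring
    | succ m ih =>
      rw [Finset.sum_range_succ, Polynomial.derivative_add, ih,
        bernsteinPolynomial.derivative_succ, Nat.add_sub_cancel]
      ring
  have := (∑ i ∈ Finset.range (m + 1), bernsteinPolynomial ℝ (N + 1) i).hasDerivAt p
  rw [h] at this
  simpa using this

lemma sum_sub_mul_binomMass (n : ℕ) (p : ℝ) :
    ∑ i ∈ Finset.range (n + 1), (i - n * p) * binomMass n p i = 0 := by
  have h := congrArg (Polynomial.eval p) (bernsteinPolynomial.sum_smul ℝ n)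
  simp only [nsmul_eq_mul, Polynomial.eval_finsetSum, Polynomial.eval_mul,
    Polynomial.eval_natCast, ← binomMass_eq_eval, Polynomial.eval_X] at h
  simp_rw [sub_mul, Finset.sum_sub_distrib, ← Finset.mul_sum, sum_binomMass, h]
  ring

lemma sum_sq_sub_mul_binomMass (n : ℕ) (p : ℝ) :
    ∑ i ∈ Finset.range (n + 1), (i - n * p) ^ 2 * binomMass n p i = n * p * (1 - p) := by
  have h := congrArg (Polynomial.eval p) (bernsteinPolynomial.variance ℝ n)
  simp only [Polynomial.eval_finsetSum, Polynomial.eval_mul, Polynomial.eval_pow,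
    Polynomial.eval_sub, ← binomMass_eq_eval, nsmul_eq_mul, Polynomial.eval_X,
    Polynomial.eval_natCast, Polynomial.eval_one] at h
  rw [← h]
  exact Finset.sum_congr rfl fun i _ => by ring

/-- Cantelli's inequality for a finite probability distribution. -/
lemma sum_le_div_of_sum_eq {ι : Type*} {s t : Finset ι} (hts : t ⊆ s) {μ f : ι → ℝ}
    (hμ : ∀ i ∈ s, 0 ≤ μ i) (h0 : ∑ i ∈ s, μ i = 1) (h1 : ∑ i ∈ s, f i * μ i = 0) {V y : ℝ}
    (h2 : ∑ i ∈ s, f i ^ 2 * μ i = V) (hV : 0 < V) (hy : 0 < y) (ht : ∀ i ∈ t, y ≤ f i) :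
    ∑ i ∈ t, μ i ≤ V / (V + y ^ 2) := by
  have hc : 0 < V / y := div_pos hV hy
  have hmain : (y + V / y) ^ 2 * ∑ i ∈ t, μ i ≤ V + (V / y) ^ 2 := by
    calc (y + V / y) ^ 2 * ∑ i ∈ t, μ i = ∑ i ∈ t, (y + V / y) ^ 2 * μ i := Finset.mul_sum ..
      _ ≤ ∑ i ∈ t, (f i + V / y) ^ 2 * μ i := by
        refine Finset.sum_le_sum fun i hi => mul_le_mul_of_nonneg_right ?_ (hμ i (hts hi))
        exact pow_le_pow_left₀ (by positivity) (by linarith [ht i hi]) 2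
      _ ≤ ∑ i ∈ s, (f i + V / y) ^ 2 * μ i :=
        Finset.sum_le_sum_of_subset_of_nonneg hts fun i hi _ =>
          mul_nonneg (sq_nonneg _) (hμ i hi)
      _ = ∑ i ∈ s, f i ^ 2 * μ i + 2 * (V / y) * ∑ i ∈ s, f i * μ i +
          (V / y) ^ 2 * ∑ i ∈ s, μ i := by
        rw [Finset.mul_sum, Finset.mul_sum, ← Finset.sum_add_distrib, ← Finset.sum_add_distrib]
        exact Finset.sum_congr rfl fun i _ => by ring
      _ = V + (V / y) ^ 2 := by rw [h0, h1, h2]; ring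
  rw [mul_comm, ← le_div_iff₀ (by positivity)] at hmain
  refine hmain.trans_eq ?_
  field_simp
  ring

lemma binomCDF_natCast {n m : ℕ} (hm : m ≤ n + 1) (p : ℝ) :
    binomCDF n p m = ∑ i ∈ Finset.range m, binomMass n p i := by
  rw [binomCDF, ← Finset.sum_filter]
  refine Finset.sum_congr ?_ fun i _ => rfl
  ext i
  simp only [Finset.mem_filter, Finset.mem_range, Nat.cast_lt]
  omega

lemma binomCDF_le {n k m : ℕ} (hk : k ≤ n) (hm : m = k ∨ m = k + 1) {p : ℝ} (hp : 0 < p)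
    (hp' : p < 1) (hn : 0 < n) (h : k < n * p) :
    binomCDF n p m ≤ n * p * (1 - p) / (n * p * (1 - p) + (k - n * p) ^ 2) := by
  have hn' : (0 : ℝ) < n := Nat.cast_pos.2 hn
  have hq : 0 < 1 - p := by linarith
  rw [binomCDF_natCast (by omega)]
  have := sum_le_div_of_sum_eq (s := Finset.range (n + 1)) (t := Finset.range m)
    (Finset.range_mono (by omega)) (fun i _ => binomMass_nonneg hp.le hp'.le n i)
    (sum_binomMass n p) (f := fun i => -((i : ℝ) - n * p)) (y := n * p - k)
    (V := n * p * (1 - p))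
    (by simp_rw [neg_mul, Finset.sum_neg_distrib, sum_sub_mul_binomMass, neg_zero])
    (by simp_rw [neg_sq, sum_sq_sub_mul_binomMass]) (by positivity) (by linarith)
    (fun i hi => by
      have : (i : ℝ) ≤ k := by
        have := Finset.mem_range.1 hi
        exact_mod_cast (by omega : i ≤ k)
      linarith)
  rwa [show (n * p - k) ^ 2 = (k - n * p) ^ 2 by ring] at this

lemma le_binomCDF {n k m : ℕ} (hk : k ≤ n) (hm : m = k ∨ m = k + 1) {p : ℝ} (hp : 0 < p)
    (hp' : p < 1) (hn : 0 < n) (h : n * p < k) :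
    1 - n * p * (1 - p) / (n * p * (1 - p) + (k - n * p) ^ 2) ≤ binomCDF n p m := by
  have hn' : (0 : ℝ) < n := Nat.cast_pos.2 hn
  have hq : 0 < 1 - p := by linarith
  rw [binomCDF_natCast (by omega)]
  have h1 := sum_le_div_of_sum_eq (s := Finset.range (n + 1)) (t := Finset.Ico m (n + 1))
    (by rw [Finset.range_eq_Ico]; exact Finset.Ico_subset_Ico_left (Nat.zero_le m))
    (fun i _ => binomMass_nonneg hp.le hp'.le n i)
    (sum_binomMass n p) (f := fun i => (i : ℝ) - n * p) (y := k - n * p)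
    (sum_sub_mul_binomMass n p)
    (sum_sq_sub_mul_binomMass n p) (by positivity) (by linarith)
    (fun i hi => by
      have : (k : ℝ) ≤ i := by
        have := Finset.mem_Ico.1 hi
        exact_mod_cast (by omega : k ≤ i)
      linarith)
  have h2 := Finset.sum_range_add_sum_Ico (fun i => binomMass n p i) (by omega : m ≤ n + 1)
  rw [sum_binomMass] at h2
  linarith

lemma binomCDF_mem_Icc {n m : ℕ} (hm : m ≤ n + 1) {p : ℝ} (hp : 0 < p) (hp' : p < 1) :
    binomCDF n p m ∈ Set.Icc 0 1 := by
  rw [binomCDF_natCast hm]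
  exact ⟨Finset.sum_nonneg fun i _ => binomMass_nonneg hp.le hp'.le n i,
    sum_range_binomMass_le_one hp.le hp'.le n (Finset.range_mono hm)⟩

lemma integrable_exp_neg_sq_div_two :
    MeasureTheory.Integrable fun t : ℝ => Real.exp (-t ^ 2 / 2) := by
  refine (integrable_exp_neg_mul_sq (b := 1 / 2) (by norm_num)).congr (.of_forall fun t => ?_)
  ring_nf

lemma integral_exp_neg_sq_div_two :
    ∫ t : ℝ, Real.exp (-t ^ 2 / 2) = Real.sqrt (2 * Real.pi) := by
  rw [show 2 * Real.pi = Real.pi / (1 / 2) by ring, ← integral_gaussian]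
  refine MeasureTheory.integral_congr_ae (.of_forall fun t => ?_)
  ring_nf

lemma integral_Iio_zero_exp_neg_sq_div_two :
    ∫ t in Set.Iio (0 : ℝ), Real.exp (-t ^ 2 / 2) = Real.sqrt (2 * Real.pi) / 2 := by
  rw [show 2 * Real.pi = Real.pi / (1 / 2) by ring, ← integral_gaussian_Ioi,
    ← MeasureTheory.integral_Iic_eq_integral_Iio]
  rw [← neg_zero, ← integral_comp_neg_Iic]
  simp only [neg_zero]
  refine MeasureTheory.integral_congr_ae (.of_forall fun t => ?_)
  ring_nf

lemma Phi_zero : Phi 0 = 1 / 2 := by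
  rw [Phi, integral_Iio_zero_exp_neg_sq_div_two]
  field_simp

lemma Phi_nonneg (x : ℝ) : 0 ≤ Phi x :=
  mul_nonneg (by positivity) (MeasureTheory.integral_nonneg fun t => (Real.exp_pos _).le)

lemma Phi_le_one (x : ℝ) : Phi x ≤ 1 := by
  have h := MeasureTheory.setIntegral_le_integral (s := Set.Iio x) integrable_exp_neg_sq_div_two
    (.of_forall fun t => (Real.exp_pos _).le)
  rw [integral_exp_neg_sq_div_two] at h
  calc Phi x ≤ (Real.sqrt (2 * Real.pi))⁻¹ * Real.sqrt (2 * Real.pi) :=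
        mul_le_mul_of_nonneg_left h (by positivity)
    _ = 1 := inv_mul_cancel₀ (by positivity)

lemma hasDerivAt_Phi (x : ℝ) : HasDerivAt Phi (stdNormalPdf x) x := by
  have hcont : Continuous fun t : ℝ => Real.exp (-t ^ 2 / 2) := by fun_prop
  have heq : Phi = fun x => (Real.sqrt (2 * Real.pi))⁻¹ *
      ((∫ t in Set.Iic 0, Real.exp (-t ^ 2 / 2)) + ∫ t in (0 : ℝ)..x, Real.exp (-t ^ 2 / 2)) := by
    funext x
    rw [← intervalIntegral.integral_Iic_sub_Iic integrable_exp_neg_sq_div_two.integrableOn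
      integrable_exp_neg_sq_div_two.integrableOn, Phi,
      MeasureTheory.integral_Iic_eq_integral_Iio (x := x)]
    ring
  rw [heq]
  exact ((hcont.integral_hasStrictDerivAt 0 x).hasDerivAt.const_add _).const_mul _

lemma monotone_Phi : Monotone Phi :=
  monotone_of_hasDerivAt_nonneg hasDerivAt_Phi fun x => (stdNormalPdf_pos x).le

lemma abs_Phi_sub_half_le (x : ℝ) : |Phi x - 1 / 2| ≤ 0.399 * |x| := by
  have h := convex_univ.norm_image_sub_le_of_norm_hasDerivWithin_le (f := Phi) (C := 0.399)
    (fun x _ => (hasDerivAt_Phi x).hasDerivWithinAt)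
    (fun x _ => by
      rw [Real.norm_of_nonneg (stdNormalPdf_pos x).le]
      exact stdNormalPdf_le x) (Set.mem_univ 0) (Set.mem_univ x)
  simpa [Phi_zero] using h

lemma one_div_one_add_sq_sub_le {y : ℝ} (hy : 0 ≤ y) {b : ℝ} (hb : |b - 1 / 2| ≤ 0.399 * y)
    (hb0 : 0 ≤ b) : 1 / (1 + y ^ 2) - b ≤ 0.542 := by
  rcases le_or_gt y 1 with h | h
  · have h1 : 1 / (1 + y ^ 2) ≤ 1.042 - 0.399 * y := by
      rw [div_le_iff₀ (by positivity)]
      nlinarith [mul_nonneg (by linarith : 0 ≤ 0.8664 - 0.399 * y) (sq_nonneg (y - 0.22))]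
    have := (abs_le.1 hb).1
    linarith
  · have h1 : 1 / (1 + y ^ 2) ≤ 1 / 2 := one_div_le_one_div_of_le (by norm_num) (by nlinarith)
    linarith

lemma abs_binomCDF_sub_Gnp_le {n k m : ℕ} (hn : 0 < n) (hk : k ≤ n) (hm : m = k ∨ m = k + 1)
    {p : ℝ} (hp : 0 < p) (hp' : p < 1) : |binomCDF n p m - Gnp n p k| ≤ 0.542 := by
  have hn' : (0 : ℝ) < n := Nat.cast_pos.2 hn
  have hq : 0 < 1 - p := by linarith
  have hV : 0 < n * p * (1 - p) := by positivity
  obtain ⟨hF0, hF1⟩ := binomCDF_mem_Icc (n := n) (m := m) (by omega) hp hp'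
  rw [Gnp]
  set x := (k - n * p) / Real.sqrt (n * p * (1 - p)) with hx
  have hdiv : n * p * (1 - p) / (n * p * (1 - p) + (k - n * p) ^ 2) = 1 / (1 + x ^ 2) := by
    rw [hx, div_pow, Real.sq_sqrt hV.le]
    field_simp
  have hhalf := abs_Phi_sub_half_le x
  have h0 := Phi_nonneg x
  have h1 := Phi_le_one x
  rw [abs_le]
  rcases lt_trichotomy (k : ℝ) (n * p) with h | h | h
  · have hx0 : x ≤ 0 := div_nonpos_of_nonpos_of_nonneg (by linarith) (Real.sqrt_nonneg _)
    have hle := binomCDF_le hk hm hp hp' hn h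
    have hmono := monotone_Phi hx0
    rw [Phi_zero] at hmono
    rw [abs_of_nonpos hx0] at hhalf
    have := one_div_one_add_sq_sub_le (neg_nonneg.2 hx0) hhalf h0
    rw [neg_sq] at this
    constructor <;> linarith
  · have : x = 0 := by rw [hx, h, sub_self, zero_div]
    rw [this, Phi_zero]
    constructor <;> linarith
  · have hx0 : 0 ≤ x := div_nonneg (by linarith) (Real.sqrt_nonneg _)
    have hle := le_binomCDF hk hm hp hp' hn h
    have hmono := monotone_Phi hx0
    rw [Phi_zero] at hmono
    rw [abs_of_nonneg hx0] at hhalf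
    have := one_div_one_add_sq_sub_le hx0 (b := 1 - Phi x)
      (by rwa [show 1 - Phi x - 1 / 2 = -(Phi x - 1 / 2) by ring, abs_neg]) (by linarith)
    constructor <;> linarith

lemma hasDerivAt_Gnp {n : ℕ} (hn : 0 < n) (y : ℝ) {p : ℝ} (hp : 0 < p) (hp' : p < 1) :
    HasDerivAt (fun p => Gnp n p y)
      (-(stdNormalPdf ((y - n * p) / Real.sqrt (n * p * (1 - p))) *
        (Real.sqrt (n * p * (1 - p)) +
          (y - n * p) / Real.sqrt (n * p * (1 - p)) * (1 - 2 * p) / 2) / (p * (1 - p)))) p := by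
  have hn' : (0 : ℝ) < n := Nat.cast_pos.2 hn
  have hq : 0 < 1 - p := by linarith
  have hV : 0 < n * p * (1 - p) := by positivity
  have hs : 0 < Real.sqrt (n * p * (1 - p)) := Real.sqrt_pos.2 hV
  have hsq : Real.sqrt (n * p * (1 - p)) ^ 2 = n * p * (1 - p) := Real.sq_sqrt hV.le
  have h1 : HasDerivAt (fun p : ℝ => y - n * p) (-n) p := by
    simpa using ((hasDerivAt_id p).const_mul (n : ℝ)).const_sub y
  have h2 : HasDerivAt (fun p : ℝ => n * p * (1 - p)) (n * (1 - 2 * p)) p := by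
    have := ((hasDerivAt_id p).const_mul (n : ℝ)).mul ((hasDerivAt_id p).const_sub 1)
    refine this.congr_deriv ?_
    simp only [id]
    ring
  refine ((hasDerivAt_Phi _).comp p (h1.div (h2.sqrt hV.ne') hs.ne')).congr_deriv ?_
  change stdNormalPdf ((y - n * p) / Real.sqrt (n * p * (1 - p))) * _ = _
  rw [hsq]
  generalize stdNormalPdf ((y - n * p) / Real.sqrt (n * p * (1 - p))) = φ
  generalize Real.sqrt (n * p * (1 - p)) = r at *
  field_simp
  rw [hsq]
  ring

/-- The derivative in `p` of the difference between the binomial distribution function and its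
normal approximation, together with a bound on it. -/
lemma exists_hasDerivAt_binomCDF_sub_Gnp {n k m : ℕ} (hn : 0 < n) (hk : k ≤ n)
    (hm : m = k ∨ m = k + 1) {p : ℝ} (hp : 0 < p) (hp' : p ≤ 1 / 2) :
    ∃ d, HasDerivAt (fun p => binomCDF n p m - Gnp n p k) d p ∧
      p * (1 - p) * |d| ≤ 0.516 / p + 0.121 := by
  obtain ⟨N, rfl⟩ := Nat.exists_eq_succ_of_ne_zero hn.ne'
  have hq : 0 < 1 - p := by linarith
  have hG := hasDerivAt_Gnp hn k hp (by linarith : p < 1)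
  simp only [Nat.succ_eq_add_one, Nat.cast_add, Nat.cast_one, mul_assoc] at hG
  have hV : 0 < (N + 1) * (p * (1 - p)) := by positivity
  have hs : 0 < Real.sqrt ((N + 1) * (p * (1 - p))) := Real.sqrt_pos.2 hV
  have hsq : Real.sqrt ((N + 1) * (p * (1 - p))) ^ 2 = (N + 1) * (p * (1 - p)) :=
    Real.sq_sqrt hV.le
  set r := Real.sqrt ((N + 1) * (p * (1 - p)))
  set x := (k - (N + 1) * p) / r with hx
  have hxφ := abs_mul_stdNormalPdf_le x
  have hpos : 0 < p * (1 - p) := by positivity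
  have hsum : ∀ j : ℕ, ∀ s : ℝ, (s = 0 ∨ s = 1) → (j + s : ℝ) = k → m = j + 1 →
      ∃ d, HasDerivAt (fun p => binomCDF (N + 1) p m - Gnp (N + 1) p k) d p ∧
      p * (1 - p) * |d| ≤ 0.516 / p + 0.121 := by
    intro j s hs01 hjs hmj
    have hloc := local_limit_bound hp hp' hs01 N j
    rw [hjs] at hloc
    have hF := hasDerivAt_sum_binomMass N j p
    have heq : (fun p => binomCDF (N + 1) p m) =
        fun p => ∑ i ∈ Finset.range (j + 1), binomMass (N + 1) p i := by
      funext p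
      rw [binomCDF_natCast (by omega), hmj]
    rw [← heq] at hF
    refine ⟨_, hF.sub hG, ?_⟩
    rw [← abs_of_pos hpos, ← abs_mul, abs_of_pos hpos]
    have : p * (1 - p) * (-((N + 1) * binomMass N p j) -
        -(stdNormalPdf x * (r + x * (1 - 2 * p) / 2) / (p * (1 - p)))) =
        -((N + 1) * (p * (1 - p)) * binomMass N p j - r * stdNormalPdf x) +
          (1 - 2 * p) / 2 * (x * stdNormalPdf x) := by
      field_simp
      ring
    rw [this]
    refine (abs_add_le _ _).trans (add_le_add ?_ ?_)
    · rwa [abs_neg]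
    · rw [abs_mul, abs_mul x, abs_of_pos (stdNormalPdf_pos x), abs_of_nonneg (by linarith)]
      have := mul_nonneg (abs_nonneg x) (stdNormalPdf_pos x).le
      nlinarith
  rcases hm with rfl | rfl
  · cases m with
    | zero =>
      have hF : (fun p => binomCDF (N + 1) p (0 : ℕ)) = fun _ => 0 := by
        funext p
        rw [binomCDF_natCast (by omega), Finset.sum_range_zero]
      have hF' : HasDerivAt (fun p => binomCDF (N + 1) p (0 : ℕ)) 0 p := by
        rw [hF]
        exact hasDerivAt_const p 0
      refine ⟨_, hF'.sub hG, ?_⟩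
      rw [← abs_of_pos hpos, ← abs_mul, abs_of_pos hpos]
      have hr : r = (1 - p) * -x := by
        rw [hx]
        field_simp
        rw [hsq]
        simp
        ring
      have : p * (1 - p) * (0 - -(stdNormalPdf x * (r + x * (1 - 2 * p) / 2) / (p * (1 - p)))) =
          -(1 / 2) * (x * stdNormalPdf x) := by
        rw [hr]
        field_simp
        ring
      have h516 : 0 ≤ 0.516 / p := by positivity
      rw [this, abs_mul, abs_mul x, abs_of_pos (stdNormalPdf_pos x), abs_neg,
        abs_of_pos one_half_pos]
      linarith
    | succ j => exact hsum j 1 (Or.inr rfl) (by push_cast; rfl) rfl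
  · exact hsum k 0 (Or.inl rfl) (add_zero _) rfl

lemma rho_pos {p : ℝ} (hp : 0 < p) (hp' : p < 1) : 0 < rho p := by
  have : 0 < 1 - p := by linarith
  unfold rho
  positivity

lemma hasDerivAt_inv_rho {p : ℝ} (hp : 0 < p) (hp' : p < 1) :
    HasDerivAt (fun p => (rho p)⁻¹)
      ((1 - 2 * p) * (1 + 2 * p * (1 - p)) /
        (2 * Real.sqrt (p * (1 - p)) * (1 - 2 * p * (1 - p)) ^ 2)) p := by
  have hq : 0 < 1 - p := by linarith
  have hv : 0 < p * (1 - p) := by positivity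
  have hs : 0 < Real.sqrt (p * (1 - p)) := Real.sqrt_pos.2 hv
  have hsq : Real.sqrt (p * (1 - p)) ^ 2 = p * (1 - p) := Real.sq_sqrt hv.le
  have hw : 0 < 1 - 2 * p * (1 - p) := by nlinarith [sq_nonneg (1 - 2 * p)]
  have heq : (fun p => (rho p)⁻¹) =
      fun p => Real.sqrt (p * (1 - p)) / (1 - 2 * p * (1 - p)) := by
    funext p
    rw [rho, inv_div]
    ring_nf
  have h1 : HasDerivAt (fun p : ℝ => p * (1 - p)) (1 - 2 * p) p := by
    refine ((hasDerivAt_id p).mul ((hasDerivAt_id p).const_sub 1)).congr_deriv ?_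
    simp only [id]
    ring
  have h2 : HasDerivAt (fun p : ℝ => 1 - 2 * p * (1 - p)) (-2 * (1 - 2 * p)) p := by
    have := (h1.const_mul 2).const_sub 1
    simp only [← mul_assoc] at this
    refine this.congr_deriv ?_
    ring
  rw [heq]
  refine ((h1.sqrt hv.ne').div h2 hw.ne').congr_deriv ?_
  generalize Real.sqrt (p * (1 - p)) = r at *
  field_simp
  rw [hsq]
  ring

lemma antitoneOn_L : AntitoneOn L (Set.Ioc 0 (1 / 2)) := by
  set M : ℝ → ℝ := fun p => (0.516 / p + 0.121 +
    0.271 * ((1 - 2 * p) * (1 + 2 * p * (1 - p)) / (1 - 2 * p * (1 - p)))) /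
      (1 - 2 * p * (1 - p)) with hM
  have hw : ∀ p : ℝ, 0 < 1 - 2 * p * (1 - p) := fun p => by nlinarith [sq_nonneg (1 - 2 * p)]
  have hderiv : ∀ p : ℝ, 0 < p → HasDerivAt M
      (-(0.516 * (1 - 4 * p + 6 * p ^ 2) * (1 - 2 * p * (1 - p)) -
        0.242 * p ^ 2 * (1 - 2 * p) * (1 - 2 * p * (1 - p)) -
        0.271 * p ^ 2 * (4 - 20 * (p * (1 - p)) - 8 * (p * (1 - p)) ^ 2)) /
        (p ^ 2 * (1 - 2 * p * (1 - p)) ^ 3)) p := by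
    intro p hp
    have hwp := hw p
    have hid := hasDerivAt_id' p
    have h1 : HasDerivAt (fun p : ℝ => 2 * p * (1 - p)) (2 * (1 - 2 * p)) p :=
      ((hid.const_mul 2).mul (hid.const_sub 1)).congr_deriv (by ring)
    have h2 := (hasDerivAt_const p (0.516 : ℝ)).div hid hp.ne'
    have h3 := ((hid.const_mul 2).const_sub 1).mul (h1.const_add 1)
    have h4 := ((h2.add_const (0.121 : ℝ)).add
      ((h3.div (h1.const_sub 1) hwp.ne').const_mul 0.271)).div (h1.const_sub 1) hwp.ne'
    refine h4.congr_deriv ?_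
    simp only [Pi.mul_apply, Pi.add_apply, Pi.div_apply]
    generalize hW : 1 - 2 * p * (1 - p) = w at *
    field_simp
    rw [← hW]
    ring
  have hanti : AntitoneOn M (Set.Ioc 0 (1 / 2)) := by
    refine antitoneOn_of_hasDerivWithinAt_nonpos (convex_Ioc _ _)
      (fun p hp => (hderiv p hp.1).continuousAt.continuousWithinAt)
      (fun p hp => (hderiv p (interior_subset hp).1).hasDerivWithinAt) fun p hp => ?_
    obtain ⟨hp0, hp1⟩ := interior_subset hp
    have hwp := hw p
    refine div_nonpos_of_nonpos_of_nonneg ?_ (by positivity)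
    rw [neg_nonpos]
    have hu : 0 ≤ p * (1 - p) := mul_nonneg hp0.le (by linarith)
    have hw2 : 1 / 2 ≤ 1 - 2 * p * (1 - p) := by nlinarith [sq_nonneg (1 - 2 * p)]
    have hA : 0 ≤ 0.516 * (1 - 4 * p + 6 * p ^ 2) - 0.242 * p ^ 2 * (1 - 2 * p) -
        2 * (0.271 * p ^ 2 * (4 - 20 * (p * (1 - p)))) := by
      nlinarith [mul_nonneg (by linarith : 0 ≤ p + 0.54) (sq_nonneg (p - 0.27)),
        mul_nonneg (pow_nonneg hp0.le 3) (sub_nonneg.2 hp1), sq_nonneg (p - 0.56)]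
    have hB : 0 ≤ 0.516 * (1 - 4 * p + 6 * p ^ 2) - 0.242 * p ^ 2 * (1 - 2 * p) := by
      nlinarith [sq_nonneg (1 - 3 * p), pow_nonneg hp0.le 3]
    rcases le_total (4 - 20 * (p * (1 - p))) 0 with h | h
    · nlinarith [mul_nonneg hB hwp.le, mul_nonneg (sq_nonneg p) (neg_nonneg.2 h),
        mul_nonneg (sq_nonneg p) (sq_nonneg (p * (1 - p)))]
    · nlinarith [mul_nonneg hA hwp.le, mul_nonneg (mul_nonneg (sq_nonneg p) h)
        (sub_nonneg.2 hw2), mul_nonneg (sq_nonneg p) (sq_nonneg (p * (1 - p)))]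
  intro p hp r hr hpr
  have hLM : ∀ p, L p = 1 / Real.sqrt (p * (1 - p)) * M p := fun p => by
    rw [L, hM, one_div_mul_eq_div, one_div_mul_eq_div, div_div]
  rw [hLM, hLM]
  have hq : 0 < 1 - p := by linarith [hp.2]
  have hv : 0 < p * (1 - p) := mul_pos hp.1 hq
  have hwr := hw r
  have h2r : 0 ≤ 1 - 2 * r := by linarith [hr.2]
  have hr0 := hr.1
  have h1r : 0 ≤ 1 - r := by linarith
  refine mul_le_mul (one_div_le_one_div_of_le (Real.sqrt_pos.2 hv) (Real.sqrt_le_sqrt ?_))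
    (hanti hp hr hpr) ?_ (by positivity)
  · nlinarith [hp.2, hr.2]
  · simp only [hM]
    positivity

lemma abs_div_rho_sub_div_rho_le {n k m : ℕ} (hn : 0 < n) (hk : k ≤ n)
    (hm : m = k ∨ m = k + 1) {a p r : ℝ} (ha : 0 < a) (hp : p ∈ Set.Icc a (1 / 2))
    (hr : r ∈ Set.Icc a (1 / 2)) :
    |(binomCDF n p m - Gnp n p k) / rho p - (binomCDF n r m - Gnp n r k) / rho r| ≤
      L a * |p - r| := by
  have hmain : ∀ t ∈ Set.Icc a (1 / 2), ∃ d,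
      HasDerivAt (fun t => (binomCDF n t m - Gnp n t k) / rho t) d t ∧ ‖d‖ ≤ L a := by
    intro t ht
    have ht0 : 0 < t := ha.trans_le ht.1
    have ht1 : t < 1 := by linarith [ht.2]
    have hq : 0 < 1 - t := by linarith
    have hv : 0 < t * (1 - t) := mul_pos ht0 hq
    have hs : 0 < Real.sqrt (t * (1 - t)) := Real.sqrt_pos.2 hv
    have hw : 0 < 1 - 2 * t * (1 - t) := by nlinarith [sq_nonneg (1 - 2 * t)]
    have h2t : 0 ≤ 1 - 2 * t := by linarith [ht.2]
    obtain ⟨d, hd, hdle⟩ := exists_hasDerivAt_binomCDF_sub_Gnp hn hk hm ht0 ht.2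
    have hD := abs_binomCDF_sub_Gnp_le hn hk hm ht0 ht1
    simp only [div_eq_mul_inv _ (rho _)]
    refine ⟨_, hd.mul (hasDerivAt_inv_rho ht0 ht1), ?_⟩
    refine le_trans ?_ (antitoneOn_L ⟨ha, ht.1.trans ht.2⟩ ⟨ht0, ht.2⟩ ht.1)
    have hinv : (rho t)⁻¹ = t * (1 - t) * (1 / ((1 - 2 * t * (1 - t)) *
        Real.sqrt (t * (1 - t)))) := by
      rw [rho, inv_div, show t ^ 2 + (1 - t) ^ 2 = 1 - 2 * t * (1 - t) by ring]
      field_simp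
      rw [Real.sq_sqrt hv.le]
    rw [Real.norm_eq_abs]
    calc _ ≤ |d| * (rho t)⁻¹ + |binomCDF n t m - Gnp n t k| *
          ((1 - 2 * t) * (1 + 2 * t * (1 - t)) /
            (2 * Real.sqrt (t * (1 - t)) * (1 - 2 * t * (1 - t)) ^ 2)) := by
          refine (abs_add_le _ _).trans_eq ?_
          rw [abs_mul, abs_mul, abs_of_pos (inv_pos.2 (rho_pos ht0 ht1)),
            abs_of_nonneg (a := (1 - 2 * t) * _ / _) (by positivity)]
      _ = (t * (1 - t) * |d|) * (1 / ((1 - 2 * t * (1 - t)) * Real.sqrt (t * (1 - t)))) +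
          |binomCDF n t m - Gnp n t k| * ((1 - 2 * t) * (1 + 2 * t * (1 - t)) /
            (2 * Real.sqrt (t * (1 - t)) * (1 - 2 * t * (1 - t)) ^ 2)) := by
          rw [hinv]
          ring
      _ ≤ (0.516 / t + 0.121) * (1 / ((1 - 2 * t * (1 - t)) * Real.sqrt (t * (1 - t)))) +
          0.542 * ((1 - 2 * t) * (1 + 2 * t * (1 - t)) /
            (2 * Real.sqrt (t * (1 - t)) * (1 - 2 * t * (1 - t)) ^ 2)) := by
          gcongr
      _ = L t := by
          rw [L]
          generalize 1 - 2 * t * (1 - t) = w at *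
          field_simp
          ring
  choose! d hd hdle using hmain
  have h := (convex_Icc a (1 / 2)).norm_image_sub_le_of_norm_hasDerivWithin_le
    (fun t ht => (hd t ht).hasDerivWithinAt) hdle hr hp
  simpa only [Real.norm_eq_abs] using h

/-- Interpolation theorem: if `0 < p* < p ≤ 0.5` and `p′` is a node of a grid
with step `h` on `[p*, 0.5]` closest to `p` (so `|p − p′| ≤ h/2`), then for all
`n ≥ 1` and `0 ≤ k ≤ n`,
`|Δ_{n,k}(p)/ρ(p) − Δ_{n,k}(p′)/ρ(p′)| ≤ (h/2)·L(p*)`. -/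
theorem interpolation_bound (pstar p h p' : ℝ)
    (hpstar : 0 < pstar) (hpl : pstar < p) (hpr : p ≤ 0.5)
    (hh : 0 < h) (hp' : p' ∈ Set.Icc pstar 0.5) (hclose : |p - p'| ≤ h / 2)
    (n k : ℕ) (hn : 1 ≤ n) (hk : k ≤ n) :
    |Deltank n k p / rho p - Deltank n k p' / rho p'| ≤ (h / 2) * L pstar := by
  have hhalf : (0.5 : ℝ) = 1 / 2 := by norm_num
  rw [hhalf] at hpr hp'
  have hp0 : 0 < p := hpstar.trans hpl
  have hp'0 : 0 < p' := hpstar.trans_le hp'.1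
  have hL : 0 ≤ L pstar := by
    have h1 : 0 ≤ 1 - pstar := by linarith
    have h2 : 0 ≤ 1 - 2 * pstar := by linarith
    have h3 : 0 ≤ 1 - 2 * pstar * (1 - pstar) := by nlinarith [sq_nonneg (1 - 2 * pstar)]
    unfold L
    positivity
  have hDelta : ∀ t, 0 < t → t ≤ 1 / 2 → Deltank n k t / rho t =
      max |(binomCDF n t (k : ℕ) - Gnp n t k) / rho t|
        |(binomCDF n t (k + 1 : ℕ) - Gnp n t k) / rho t| := by
    intro t ht ht'
    have hrho := rho_pos ht (by linarith : t < 1)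
    rw [Deltank, ← max_div_div_right hrho.le, abs_div, abs_div, abs_of_pos hrho]
    push_cast
    rfl
  rw [hDelta p hp0 hpr, hDelta p' hp'0 hp'.2]
  have hstep : L pstar * |p - p'| ≤ h / 2 * L pstar := by
    rw [mul_comm]
    exact mul_le_mul_of_nonneg_right hclose hL
  refine (abs_max_sub_max_le_max _ _ _ _).trans (max_le ?_ ?_)
  · exact ((abs_abs_sub_abs_le _ _).trans (abs_div_rho_sub_div_rho_le hn hk (Or.inl rfl) hpstar
      ⟨hpl.le, hpr⟩ hp')).trans hstep
  · exact ((abs_abs_sub_abs_le _ _).trans (abs_div_rho_sub_div_rho_le hn hk (Or.inr rfl) hpstar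
      ⟨hpl.le, hpr⟩ hp')).trans hstep
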